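/- arXiv:2312.03939 — 6 statements merged into one kernel-verified Lean document; each statement's English description precedes it below -/
import Mathlib

section
/- Let n ≥ 1 and r = n − 1. In the polynomial ring ℚ[X, Y, z₁, …, z_{n−1}], for every integer p with 0 ≤ p ≤ n + 1 one has e_p(X, X+Y, X+z₁, …, X+z_{n−1}) = Σ_{i=0}^{p} C(n+1−i, p−i) · ( X^{p−i} e_i(z₁,…,z_{n−1}) + X^{p−i} Y e_{i−1}(z₁,…,z_{n−1}) ), where e_j denotes the elementary symmetric polynomial of degree j (with the conventions e_{−1} = 0 and e_j(z₁,…,z_{n−1}) = 0 for j ≥ n). Here the left-hand side is the elementary symmetric polynomial of degree p in the n + 1 listed elements. -/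
open MvPolynomial Finset

/-!
By Vieta, `e_p` of a multiset `s` of size `m` is the coefficient of `T ^ (m - p)` in `∏ (T + a)`.
Translating all elements of `s` by `x` substitutes `T + x` for `T`, so expanding the powers
`(T + x) ^ (m - i)` expresses `e_p` of the translate through the `e_i` of `s`. The elements
`X, X + Y, X + z₁, …, X + z_{n-1}` are the translate by `X` of `0, Y, z₁, …, z_{n-1}`, whose `e_i`
is `e_i(z) + Y e_{i-1}(z)`.
-/

section Esymm

variable {R : Type*} [CommSemiring R]

theorem esymm_eq_zero_of_card_lt {s : Multiset R} {p : ℕ} (hp : s.card < p) : s.esymm p = 0 := by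
  simp [Multiset.esymm, Multiset.powersetCard_eq_empty p hp]

theorem esymm_cons_succ (a : R) (s : Multiset R) (k : ℕ) :
    (a ::ₘ s).esymm (k + 1) = s.esymm (k + 1) + a * s.esymm k := by
  simp [Multiset.esymm, Multiset.powersetCard_cons, Multiset.sum_map_mul_left]

theorem esymm_cons (a : R) (s : Multiset R) (i : ℕ) :
    (a ::ₘ s).esymm i = s.esymm i + a * (if i = 0 then 0 else s.esymm (i - 1)) := by
  cases i with
  | zero => simp [Multiset.esymm]
  | succ k => simpa using esymm_cons_succ a s k

theorem prod_X_add_C_map_add_left (x : R) (s : Multiset R) :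
    ((s.map (x + ·)).map fun b => Polynomial.X + Polynomial.C b).prod =
      ∑ i ∈ range (s.card + 1),
        Polynomial.C (s.esymm i) * (Polynomial.X + Polynomial.C x) ^ (s.card - i) := by
  calc ((s.map (x + ·)).map fun b => Polynomial.X + Polynomial.C b).prod
      = (s.map fun a => Polynomial.X + Polynomial.C a).prod.comp
          (Polynomial.X + Polynomial.C x) := by
        simp [Polynomial.multiset_prod_comp, add_assoc]
    _ = _ := by
        simp [Multiset.prod_X_add_C_eq_sum_esymm, Polynomial.sum_comp]

theorem coeff_C_mul_X_add_C_pow_sub (x c : R) {m p i : ℕ} (hip : i ≤ p) (hpm : p ≤ m) :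
    (Polynomial.C c * (Polynomial.X + Polynomial.C x) ^ (m - i)).coeff (m - p) =
      ((m - i).choose (p - i) : R) * (x ^ (p - i) * c) := by
  have hsub : m - i - (m - p) = p - i := by omega
  have hchoose : (m - i).choose (m - p) = (m - i).choose (p - i) :=
    Nat.choose_symm_of_eq_add (by omega)
  rw [Polynomial.coeff_C_mul, Polynomial.coeff_X_add_C_pow, hsub, hchoose]
  ring

theorem esymm_map_add_left_of_le_card (x : R) {s : Multiset R} {p : ℕ} (hp : p ≤ s.card) :
    (s.map (x + ·)).esymm p =
      ∑ i ∈ range (p + 1), ((s.card - i).choose (p - i) : R) * (x ^ (p - i) * s.esymm i) := by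
  have vieta := Multiset.prod_X_add_C_coeff (s.map (x + ·)) (k := s.card - p) (by simp)
  rw [Multiset.card_map, Nat.sub_sub_self hp, prod_X_add_C_map_add_left,
    Polynomial.finsetSum_coeff] at vieta
  rw [← vieta]
  symm
  apply sum_subset_zero_on_sdiff (range_mono (by omega))
  · intro i hi
    have hlt : s.card - i < s.card - p := by
      rw [mem_sdiff, mem_range, mem_range] at hi
      omega
    simp [Polynomial.coeff_X_add_C_pow, Nat.choose_eq_zero_of_lt hlt]
  · intro i hi
    exact (coeff_C_mul_X_add_C_pow_sub x _ (mem_range_succ_iff.mp hi) hp).symm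

theorem esymm_map_add_left (x : R) (s : Multiset R) (p : ℕ) :
    (s.map (x + ·)).esymm p =
      ∑ i ∈ range (p + 1), ((s.card - i).choose (p - i) : R) * (x ^ (p - i) * s.esymm i) := by
  rcases le_or_gt p s.card with hp | hp
  · exact esymm_map_add_left_of_le_card x hp
  rw [esymm_eq_zero_of_card_lt (by simpa using hp)]
  refine (sum_eq_zero fun i _ => ?_).symm
  rcases le_or_gt i s.card with hi | hi
  · simp [Nat.choose_eq_zero_of_lt (show s.card - i < p - i by omega)]
  · simp [esymm_eq_zero_of_card_lt hi]

theorem stmt0_general (x y : R) (s : Multiset R) (p : ℕ) :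
    (x ::ₘ (x + y) ::ₘ s.map (x + ·)).esymm p =
      ∑ i ∈ range (p + 1), ((s.card + 2 - i).choose (p - i) : R) *
        (x ^ (p - i) * s.esymm i +
          x ^ (p - i) * y * (if i = 0 then 0 else s.esymm (i - 1))) := by
  have translate : x ::ₘ (x + y) ::ₘ s.map (x + ·) = (0 ::ₘ y ::ₘ s).map (x + ·) := by simp
  rw [translate, esymm_map_add_left]
  simp only [Multiset.card_cons, esymm_cons, zero_mul, add_zero, mul_add, mul_assoc]

end Esymm

theorem univ_val_fin_add_two (m : ℕ) :
    (univ : Finset (Fin (m + 2))).val =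
      0 ::ₘ 1 ::ₘ (univ.filter fun i : Fin (m + 2) => 2 ≤ i.val).val := by
  have univ_eq : (univ : Finset (Fin (m + 2))) =
      insert 0 (insert 1 (univ.filter fun i => 2 ≤ i.val)) := by
    ext i
    simp only [mem_univ, mem_insert, mem_filter, true_and, true_iff, Fin.ext_iff, Fin.val_zero,
      Fin.val_one]
    omega
  conv_lhs => rw [univ_eq]
  rw [insert_val_of_notMem (by simp), insert_val_of_notMem (by simp)]

theorem card_filter_two_le_fin_add_two (m : ℕ) :
    (univ.filter fun i : Fin (m + 2) => 2 ≤ i.val).card = m := by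
  have card_eq := congrArg Multiset.card (univ_val_fin_add_two m)
  simp only [card_val, card_univ, Fintype.card_fin, Multiset.card_cons] at card_eq
  omega

theorem map_univ_ite_add_fin_add_two {M : Type*} [Add M] {m : ℕ} (f : Fin (m + 2) → M) :
    (univ.val.map fun i : Fin (m + 2) => if i.val = 0 then f 0 else f 0 + f i) =
      f 0 ::ₘ (f 0 + f 1) ::ₘ
        ((univ.filter fun i : Fin (m + 2) => 2 ≤ i.val).val.map f).map (f 0 + ·) := by
  rw [univ_val_fin_add_two, Multiset.map_cons, Multiset.map_cons, Multiset.map_map]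
  congr 2
  refine Multiset.map_congr rfl fun i hi => if_neg ?_
  have two_le : 2 ≤ i.val := (Finset.mem_filter.mp (mem_val.mp hi)).2
  omega

/-- Splitting-principle form of the Lemma computing `h(c_p)`:
`e_p(X, X+Y, X+z₁, …, X+z_{n-1})
  = ∑_{i=0}^{p} C(n+1-i, p-i) (X^{p-i} e_i(z) + X^{p-i} Y e_{i-1}(z))`
in `ℚ[X, Y, z₁, …, z_{n-1}]`, realized as `MvPolynomial (Fin (n+1)) ℚ` with
`X = X 0`, `Y = X 1`, `z_i = X (i+1)` for `i = 1, …, n-1`. -/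
theorem stmt0 (n : ℕ) (hn : 1 ≤ n) (p : ℕ) (hp : p ≤ n + 1)
    (E : ℕ → MvPolynomial (Fin (n + 1)) ℚ)
    (hE : ∀ j, E j =
      (((Finset.univ.filter (fun i : Fin (n + 1) => 2 ≤ i.val)).val.map
        (fun i => X i)).esymm j)) :
    ((Finset.univ.val.map (fun i : Fin (n + 1) =>
        if i.val = 0 then X 0 else X 0 + X i)).esymm p) =
      ∑ i ∈ Finset.range (p + 1),
        (Nat.choose (n + 1 - i) (p - i) : MvPolynomial (Fin (n + 1)) ℚ) *
          (X 0 ^ (p - i) * E i +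
            X 0 ^ (p - i) * X 1 * (if i = 0 then 0 else E (i - 1))) := by
  obtain ⟨m, rfl⟩ := Nat.exists_eq_add_of_le' hn
  rw [map_univ_ite_add_fin_add_two, stmt0_general, Multiset.card_map, card_val,
    card_filter_two_le_fin_add_two]
  simp only [hE]
end

section
/- Fix an integer n ≥ 1 and work in ℚ[X, Y]. For p ≥ 0 set B_p = (−1)^p · Σ_{j=0}^{p} C(n+1, j) X^j Y^{p−j}, and set B_{−1} = 0. Then for every integer p with 1 ≤ p ≤ n − 1 one has Σ_{i=0}^{p} C(n+1−i, p−i) · ( X^{p−i} B_i + X^{p−i} Y B_{i−1} ) = 0. -/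
open MvPolynomial Finset

/-!
Put `N = n + 1`. The closed forms are the coefficients of the power series
`(1 - X t) ^ N / (1 + Y t)`, so `B_i + Y B_{i-1} = C(N, i) (-X) ^ i`.
The elimination sum is therefore `X ^ p` times
`∑ (-1) ^ i C(N, i) C(N - i, p - i) = C(N, p) ∑ (-1) ^ i C(p, i) = C(N, p) (1 - 1) ^ p`.
-/

theorem sum_range_succ_mul_pow_sub {R : Type*} [Semiring R] (a : ℕ → R) (y : R) (m : ℕ) :
    ∑ j ∈ range (m + 2), a j * y ^ (m + 1 - j) =
      (∑ j ∈ range (m + 1), a j * y ^ (m - j)) * y + a (m + 1) := by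
  rw [sum_range_succ, Nat.sub_self, pow_zero, mul_one, sum_mul]
  congr 1
  refine sum_congr rfl fun j hj => ?_
  rw [Nat.sub_add_comm (mem_range_succ_iff.mp hj), pow_succ, mul_assoc]

theorem alternating_sum_choose_mul_choose_sub (N : ℕ) {p : ℕ} (hp : p ≠ 0) :
    ∑ i ∈ range (p + 1), ((-1) ^ i * (N.choose i * (N - i).choose (p - i)) : ℤ) = 0 := by
  calc ∑ i ∈ range (p + 1), ((-1) ^ i * (N.choose i * (N - i).choose (p - i)) : ℤ)
      = ∑ i ∈ range (p + 1), (N.choose p * ((-1) ^ i * p.choose i) : ℤ) := by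
        refine sum_congr rfl fun i hi => ?_
        have choose_mul : (N.choose p * p.choose i : ℤ) = N.choose i * (N - i).choose (p - i) :=
          mod_cast Nat.choose_mul (mem_range_succ_iff.mp hi)
        rw [← choose_mul, mul_left_comm]
    _ = 0 := by rw [← mul_sum, Int.alternating_sum_range_choose_of_ne hp, mul_zero]

section EliminatedClass

variable {R : Type*} [CommRing R]

/-- The closed form of the class `c̄_p` eliminated from the Sullivan model, with `x` and `y` in the
roles of `ĉ` and `č`, and with an arbitrary `N` in place of `n + 1`. -/
def eliminatedClass (N : ℕ) (x y : R) (p : ℕ) : R :=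
  (-1) ^ p * ∑ j ∈ range (p + 1), (N.choose j : R) * x ^ j * y ^ (p - j)

theorem eliminatedClass_zero (N : ℕ) (x y : R) : eliminatedClass N x y 0 = 1 := by
  simp [eliminatedClass]

theorem eliminatedClass_succ_add (N : ℕ) (x y : R) (m : ℕ) :
    eliminatedClass N x y (m + 1) + y * eliminatedClass N x y m =
      (-1) ^ (m + 1) * N.choose (m + 1) * x ^ (m + 1) := by
  rw [eliminatedClass, eliminatedClass,
    sum_range_succ_mul_pow_sub (fun j => (N.choose j : R) * x ^ j)]
  ring

theorem eliminatedClass_add_mul_pred (N : ℕ) (x y : R) (i : ℕ) :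
    eliminatedClass N x y i + y * (if i = 0 then 0 else eliminatedClass N x y (i - 1)) =
      (-1) ^ i * N.choose i * x ^ i := by
  cases i with
  | zero => simp [eliminatedClass_zero]
  | succ m => simpa using eliminatedClass_succ_add N x y m

/-- When `i > N` the subtraction `N - i` is truncated, but that coefficient then multiplies a
vanishing factor, because `N.choose i = 0` in `eliminatedClass_add_mul_pred`. -/
theorem stmt2_general (N : ℕ) (x y : R) {p : ℕ} (hp : p ≠ 0) :
    ∑ i ∈ range (p + 1), ((N - i).choose (p - i) : R) *
      (x ^ (p - i) * eliminatedClass N x y i +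
        x ^ (p - i) * y * (if i = 0 then 0 else eliminatedClass N x y (i - 1))) = 0 := by
  have summand_eq : ∀ i ∈ range (p + 1), ((N - i).choose (p - i) : R) *
      (x ^ (p - i) * eliminatedClass N x y i +
        x ^ (p - i) * y * (if i = 0 then 0 else eliminatedClass N x y (i - 1))) =
      x ^ p * ((-1) ^ i * (N.choose i * (N - i).choose (p - i))) := by
    intro i hi
    rw [mul_assoc (x ^ (p - i)), ← mul_add, eliminatedClass_add_mul_pred,
      ← pow_sub_mul_pow x (mem_range_succ_iff.mp hi)]
    ring
  have alternating_sum :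
      ∑ i ∈ range (p + 1), ((-1) ^ i * (N.choose i * (N - i).choose (p - i)) : R) = 0 :=
    mod_cast congrArg (Int.cast : ℤ → R) (alternating_sum_choose_mul_choose_sub N hp)
  rw [sum_congr rfl summand_eq, ← mul_sum, alternating_sum, mul_zero]

end EliminatedClass

/-- The closed forms `B_p = (-1)^p ∑_{j=0}^{p} C(n+1,j) X^j Y^{p-j}` solve the
elimination equations `∑_{i=0}^{p} C(n+1-i, p-i) (X^{p-i} B_i + X^{p-i} Y B_{i-1}) = 0`
for `1 ≤ p ≤ n-1`, in `ℚ[X, Y] = MvPolynomial (Fin 2) ℚ` with `X = X 0`, `Y = X 1`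
(and the convention `B_{-1} = 0`). -/
theorem stmt2 (n : ℕ) (hn : 1 ≤ n)
    (B : ℕ → MvPolynomial (Fin 2) ℚ)
    (hB : ∀ m, B m = (-1) ^ m *
      ∑ j ∈ Finset.range (m + 1),
        (Nat.choose (n + 1) j : MvPolynomial (Fin 2) ℚ) * X 0 ^ j * X 1 ^ (m - j))
    (p : ℕ) (hp1 : 1 ≤ p) (hp2 : p ≤ n - 1) :
    ∑ i ∈ Finset.range (p + 1),
      (Nat.choose (n + 1 - i) (p - i) : MvPolynomial (Fin 2) ℚ) *
        (X 0 ^ (p - i) * B i +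
          X 0 ^ (p - i) * X 1 * (if i = 0 then 0 else B (i - 1))) = 0 := by
  obtain rfl : B = eliminatedClass (n + 1) (X 0) (X 1) := funext hB
  exact stmt2_general (n + 1) (X 0) (X 1) (Nat.one_le_iff_ne_zero.mp hp1)
end

section
/- Fix an integer n ≥ 1 and work in ℚ[X, Y]. For 0 ≤ p ≤ n − 1 set B_p = (−1)^p · Σ_{j=0}^{p} C(n+1, j) X^j Y^{p−j}, and set B_p = 0 for p ≥ n as well as B_{−1} = 0. Then Σ_{i=0}^{n} C(n+1−i, n−i) · ( X^{n−i} B_i + X^{n−i} Y B_{i−1} ) = (−1)^{n+1} · Σ_{j=0}^{n} C(n+1, j) X^j Y^{n−j}. -/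
open MvPolynomial Finset

/-!
Put `A_p = (-1)^p ∑_{j ≤ p} C(N, j) x^j y^{p-j}`, so that `(1 + y t) ∑ A_p t^p = (1 - x t)^N`, that
is, `A_i + y A_{i-1} = (-1)^i C(N, i) x^i`. Since `C(N - i, n - i) C(N, i) = C(N, n) C(n, i)`, the
sum in question with the untruncated `A_i` in place of `B_i` is
`C(N, n) x^n ∑_i (-1)^i C(n, i) = 0`. Truncating removes `A_n` from the term `i = n`, whose
coefficient is `1`, so the sum is `-A_n`.
-/

section

variable {R : Type*} [CommRing R]

theorem sum_range_neg_one_pow_mul_choose_of_ne_zero {n : ℕ} (hn : n ≠ 0) :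
    ∑ i ∈ range (n + 1), (-1 : R) ^ i * n.choose i = 0 := by
  exact_mod_cast congrArg (Int.cast (R := R)) (Int.alternating_sum_range_choose_of_ne hn)

theorem sum_range_choose_sub_mul_neg_one_pow_mul_choose (N : ℕ) {n : ℕ} (hn : n ≠ 0) :
    ∑ i ∈ range (n + 1), ((N - i).choose (n - i) : R) * ((-1) ^ i * N.choose i) = 0 := by
  calc ∑ i ∈ range (n + 1), ((N - i).choose (n - i) : R) * ((-1) ^ i * N.choose i)
      = ∑ i ∈ range (n + 1), (N.choose n : R) * ((-1) ^ i * n.choose i) := by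
        refine sum_congr rfl fun i hi => ?_
        have choose_mul_cast :
            (N.choose n : R) * n.choose i = N.choose i * (N - i).choose (n - i) := by
          rw [← Nat.cast_mul, Nat.choose_mul (mem_range_succ_iff.mp hi), Nat.cast_mul]
        linear_combination -(-1) ^ i * choose_mul_cast
    _ = 0 := by
        rw [← mul_sum, sum_range_neg_one_pow_mul_choose_of_ne_zero hn, mul_zero]

/-- The coefficient of `t ^ p` in `(1 - x t) ^ N / (1 + y t)`. For `N = n + 1`, `x = ĉ`, `y = č`
it is the closed form of the eliminated generator `c̄_p`, without the truncation at `p = n`. -/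
def quotientChernCoeff (N : ℕ) (x y : R) (p : ℕ) : R :=
  (-1) ^ p * ∑ j ∈ range (p + 1), (N.choose j : R) * x ^ j * y ^ (p - j)

theorem quotientChernCoeff_zero (N : ℕ) (x y : R) : quotientChernCoeff N x y 0 = 1 := by
  simp [quotientChernCoeff]

theorem quotientChernCoeff_succ_add (N : ℕ) (x y : R) (p : ℕ) :
    quotientChernCoeff N x y (p + 1) + y * quotientChernCoeff N x y p =
      (-1) ^ (p + 1) * N.choose (p + 1) * x ^ (p + 1) := by
  have sum_eq_mul_sum : ∑ j ∈ range (p + 1), (N.choose j : R) * x ^ j * y ^ (p + 1 - j) =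
      y * ∑ j ∈ range (p + 1), (N.choose j : R) * x ^ j * y ^ (p - j) := by
    rw [mul_sum]
    refine sum_congr rfl fun j hj => ?_
    rw [Nat.succ_sub (mem_range_succ_iff.mp hj), pow_succ]
    ring
  rw [quotientChernCoeff, quotientChernCoeff, sum_range_succ _ (p + 1), sum_eq_mul_sum,
    Nat.sub_self, pow_zero]
  ring

theorem quotientChernCoeff_add_mul_pred (N : ℕ) (x y : R) (i : ℕ) :
    quotientChernCoeff N x y i + y * (if i = 0 then 0 else quotientChernCoeff N x y (i - 1)) =
      (-1) ^ i * N.choose i * x ^ i := by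
  cases i with
  | zero => simp [quotientChernCoeff_zero]
  | succ p => simpa using quotientChernCoeff_succ_add N x y p

theorem sum_choose_mul_quotientChernCoeff_eq_zero (N : ℕ) (x y : R) {n : ℕ} (hn : n ≠ 0) :
    ∑ i ∈ range (n + 1), ((N - i).choose (n - i) : R) *
      (x ^ (n - i) * quotientChernCoeff N x y i +
        x ^ (n - i) * y * (if i = 0 then 0 else quotientChernCoeff N x y (i - 1))) = 0 := by
  calc _ = ∑ i ∈ range (n + 1),
        x ^ n * (((N - i).choose (n - i) : R) * ((-1) ^ i * N.choose i)) := by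
        refine sum_congr rfl fun i hi => ?_
        rw [mul_assoc (x ^ (n - i)), ← mul_add, quotientChernCoeff_add_mul_pred,
          ← pow_sub_mul_pow x (mem_range_succ_iff.mp hi)]
        ring
    _ = 0 := by
        rw [← mul_sum, sum_range_choose_sub_mul_neg_one_pow_mul_choose N hn, mul_zero]

theorem stmt3_general (N : ℕ) (x y : R) (n : ℕ) (hn : 1 ≤ n) (B : ℕ → R)
    (hB : ∀ m, B m = if m < n then (-1) ^ m *
      ∑ j ∈ range (m + 1), (N.choose j : R) * x ^ j * y ^ (m - j) else 0) :
    ∑ i ∈ range (n + 1), ((N - i).choose (n - i) : R) *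
      (x ^ (n - i) * B i + x ^ (n - i) * y * (if i = 0 then 0 else B (i - 1))) =
    (-1) ^ (n + 1) * ∑ j ∈ range (n + 1), (N.choose j : R) * x ^ j * y ^ (n - j) := by
  have hn₀ : n ≠ 0 := Nat.one_le_iff_ne_zero.mp hn
  have B_of_lt {m : ℕ} (hm : m < n) : B m = quotientChernCoeff N x y m := by
    rw [hB, if_pos hm, quotientChernCoeff]
  have B_self : B n = 0 := by rw [hB, if_neg (lt_irrefl n)]
  have untruncated := sum_choose_mul_quotientChernCoeff_eq_zero N x y hn₀
  have lower_terms : ∀ i ∈ range n, ((N - i).choose (n - i) : R) *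
      (x ^ (n - i) * B i + x ^ (n - i) * y * (if i = 0 then 0 else B (i - 1))) =
      ((N - i).choose (n - i) : R) * (x ^ (n - i) * quotientChernCoeff N x y i +
        x ^ (n - i) * y * (if i = 0 then 0 else quotientChernCoeff N x y (i - 1))) := by
    intro i hi
    have hin : i < n := mem_range.mp hi
    rw [B_of_lt hin, B_of_lt (i.sub_le 1 |>.trans_lt hin)]
  have rhs_eq : (-1) ^ (n + 1) * ∑ j ∈ range (n + 1), (N.choose j : R) * x ^ j * y ^ (n - j) =
      -quotientChernCoeff N x y n := by
    rw [quotientChernCoeff]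
    ring
  rw [sum_range_succ] at untruncated ⊢
  rw [sum_congr rfl lower_terms, rhs_eq, B_self, B_of_lt (Nat.sub_lt hn one_pos)]
  simp only [Nat.sub_self, Nat.choose_zero_right, Nat.cast_one, pow_zero] at untruncated ⊢
  linear_combination untruncated

end

/-- The differential `∂(s⁻¹c_n)` in the minimal Sullivan model of `Gr₁^ℂ(TℂPⁿ)`:
with `B_p = (-1)^p ∑_{j=0}^{p} C(n+1,j) X^j Y^{p-j}` for `0 ≤ p ≤ n-1`, `B_p = 0` for
`p ≥ n` and `B_{-1} = 0`, one has
`∑_{i=0}^{n} C(n+1-i, n-i) (X^{n-i} B_i + X^{n-i} Y B_{i-1})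
  = (-1)^{n+1} ∑_{j=0}^{n} C(n+1,j) X^j Y^{n-j}`
in `ℚ[X, Y] = MvPolynomial (Fin 2) ℚ` with `X = X 0`, `Y = X 1`. -/
theorem stmt3 (n : ℕ) (hn : 1 ≤ n)
    (B : ℕ → MvPolynomial (Fin 2) ℚ)
    (hB : ∀ m, B m = if m < n then (-1) ^ m *
      ∑ j ∈ Finset.range (m + 1),
        (Nat.choose (n + 1) j : MvPolynomial (Fin 2) ℚ) * X 0 ^ j * X 1 ^ (m - j)
      else 0) :
    ∑ i ∈ Finset.range (n + 1),
      (Nat.choose (n + 1 - i) (n - i) : MvPolynomial (Fin 2) ℚ) *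
        (X 0 ^ (n - i) * B i +
          X 0 ^ (n - i) * X 1 * (if i = 0 then 0 else B (i - 1))) =
    (-1) ^ (n + 1) *
      ∑ j ∈ Finset.range (n + 1),
        (Nat.choose (n + 1) j : MvPolynomial (Fin 2) ℚ) * X 0 ^ j * X 1 ^ (n - j) :=
  stmt3_general (n + 1) (X 0) (X 1) n hn B hB
end

section
/- Fix an integer n ≥ 1 and work in ℚ[X, Y]. For 0 ≤ p ≤ n − 1 set B_p = (−1)^p · Σ_{j=0}^{p} C(n+1, j) X^j Y^{p−j}, and set B_p = 0 for p ≥ n as well as B_{−1} = 0. Then Σ_{i=0}^{n+1} ( X^{n+1−i} B_i + X^{n+1−i} Y B_{i−1} ) = (−1)^{n+1} · ( n X^{n+1} + Σ_{j=0}^{n−1} C(n+1, j) X^{j+1} Y^{n−j} ). -/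
open MvPolynomial Finset

/-! The sequence `c_m = (-1)^m ∑_{j ≤ m} a_j x^j y^{m-j}` is the quotient of
`∑_j (-1)^j a_j x^j` by `1 + y`, that is, `c_m + y c_{m-1} = (-1)^m a_m x^m`. Cutting it off at
degree `n` therefore reduces the sum to `x^{n+1} ∑_{i<n} (-1)^i a_i` plus the single boundary
term `x y c_{n-1}`. For `a_j = C(n+1, j)`, the vanishing of the full alternating sum of binomial
coefficients evaluates the first part to `(-1)^{n+1} n x^{n+1}`. -/

section QuotientClass

variable {R : Type*} [CommRing R]

/-- The degree-`m` component of the formal quotient of `∑ j, (-1) ^ j * a j * x ^ j` by `1 + y`,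
where `x` and `y` have degree `1`. For `a = (n + 1).choose` these are the classes `c̄_m` before the
cutoff at degree `n`. -/
def quotientClass (a : ℕ → R) (x y : R) (m : ℕ) : R :=
  (-1) ^ m * ∑ j ∈ range (m + 1), a j * x ^ j * y ^ (m - j)

theorem mul_quotientClass_pred (a : ℕ → R) (x y : R) (m : ℕ) :
    y * (if m = 0 then 0 else quotientClass a x y (m - 1)) =
      (-1) ^ (m + 1) * ∑ j ∈ range m, a j * x ^ j * y ^ (m - j) := by
  cases m with
  | zero => simp
  | succ m =>
    have absorb_y : y * ∑ j ∈ range (m + 1), a j * x ^ j * y ^ (m - j) =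
        ∑ j ∈ range (m + 1), a j * x ^ j * y ^ (m + 1 - j) := by
      rw [mul_sum]
      refine sum_congr rfl fun j hj => ?_
      rw [Nat.sub_add_comm (mem_range_succ_iff.mp hj)]
      ring
    rw [if_neg m.succ_ne_zero, Nat.add_sub_cancel, quotientClass, ← absorb_y]
    ring

theorem quotientClass_add_mul_pred (a : ℕ → R) (x y : R) (m : ℕ) :
    quotientClass a x y m + y * (if m = 0 then 0 else quotientClass a x y (m - 1)) =
      (-1) ^ m * a m * x ^ m := by
  rw [mul_quotientClass_pred, quotientClass, sum_range_succ, Nat.sub_self]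
  ring

theorem sum_pow_mul_cutoff (c : ℕ → R) (x y : R) (n : ℕ) :
    ∑ i ∈ range (n + 2),
      (x ^ (n + 1 - i) * (if i < n then c i else 0) +
        x ^ (n + 1 - i) * y * (if i = 0 then 0 else if i - 1 < n then c (i - 1) else 0)) =
    ∑ i ∈ range n, x ^ (n + 1 - i) * (c i + y * (if i = 0 then 0 else c (i - 1))) +
      x * (y * (if n = 0 then 0 else c (n - 1))) := by
  have below_cutoff : ∀ i ∈ range n,
      x ^ (n + 1 - i) * (if i < n then c i else 0) +
        x ^ (n + 1 - i) * y * (if i = 0 then 0 else if i - 1 < n then c (i - 1) else 0) =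
      x ^ (n + 1 - i) * (c i + y * (if i = 0 then 0 else c (i - 1))) := by
    intro i hi
    have hin : i < n := mem_range.mp hi
    rw [if_pos hin, if_pos ((i.sub_le 1).trans_lt hin)]
    ring
  have pred_at_cutoff : (if n = 0 then 0 else if n - 1 < n then c (n - 1) else 0) =
      if n = 0 then 0 else c (n - 1) := by
    grind
  rw [sum_range_succ, sum_range_succ, sum_congr rfl below_cutoff, pred_at_cutoff,
    Nat.add_sub_cancel_left]
  simp [mul_assoc]

theorem sum_pow_mul_quotientClass_cutoff (a : ℕ → R) (x y : R) (n : ℕ) :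
    ∑ i ∈ range (n + 2),
      (x ^ (n + 1 - i) * (if i < n then quotientClass a x y i else 0) +
        x ^ (n + 1 - i) * y *
          (if i = 0 then 0 else if i - 1 < n then quotientClass a x y (i - 1) else 0)) =
    (∑ i ∈ range n, (-1) ^ i * a i) * x ^ (n + 1) +
      (-1) ^ (n + 1) * ∑ j ∈ range n, a j * x ^ (j + 1) * y ^ (n - j) := by
  rw [sum_pow_mul_cutoff, mul_quotientClass_pred, sum_mul]
  congr 1
  · refine sum_congr rfl fun i hi => ?_
    have hin : i ≤ n + 1 := (mem_range.mp hi).le.trans n.le_succ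
    rw [quotientClass_add_mul_pred, ← pow_sub_mul_pow x hin]
    ring
  · rw [mul_left_comm, mul_sum]
    congr 1
    exact sum_congr rfl fun j _ => by ring

end QuotientClass

theorem alternating_sum_range_choose_succ (R : Type*) [Ring R] (n : ℕ) :
    ∑ i ∈ range n, (-1) ^ i * ((n + 1).choose i : R) = (-1) ^ (n + 1) * n := by
  have over_int : ∑ i ∈ range n, (-1) ^ i * ((n + 1).choose i : ℤ) = (-1) ^ (n + 1) * n := by
    have full_sum := Int.alternating_sum_range_choose_of_ne n.succ_ne_zero
    rw [sum_range_succ, sum_range_succ, Nat.choose_self, Nat.choose_succ_self_right] at full_sum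
    push_cast at full_sum
    linear_combination full_sum
  exact_mod_cast congrArg (Int.cast : ℤ → R) over_int

theorem stmt4_general {R : Type*} [CommRing R] (n : ℕ) (x y : R) (B : ℕ → R)
    (hB : ∀ m, B m = if m < n then (-1) ^ m *
      ∑ j ∈ range (m + 1), ((n + 1).choose j : R) * x ^ j * y ^ (m - j)
      else 0) :
    ∑ i ∈ range (n + 2),
      (x ^ (n + 1 - i) * B i + x ^ (n + 1 - i) * y * (if i = 0 then 0 else B (i - 1))) =
    (-1) ^ (n + 1) *
      (n * x ^ (n + 1) +
        ∑ j ∈ range n, ((n + 1).choose j : R) * x ^ (j + 1) * y ^ (n - j)) := by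
  have B_eq_cutoff : ∀ m,
      B m = if m < n then quotientClass (fun j => ((n + 1).choose j : R)) x y m else 0 := hB
  simp only [B_eq_cutoff]
  rw [sum_pow_mul_quotientClass_cutoff, alternating_sum_range_choose_succ]
  ring

/-- The differential `∂(s⁻¹c_{n+1})` in the minimal Sullivan model of `Gr₁^ℂ(TℂPⁿ)`:
with `B_p = (-1)^p ∑_{j=0}^{p} C(n+1,j) X^j Y^{p-j}` for `0 ≤ p ≤ n-1`, `B_p = 0` for
`p ≥ n` and `B_{-1} = 0`, one has
`∑_{i=0}^{n+1} (X^{n+1-i} B_i + X^{n+1-i} Y B_{i-1})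
  = (-1)^{n+1} (n X^{n+1} + ∑_{j=0}^{n-1} C(n+1,j) X^{j+1} Y^{n-j})`
in `ℚ[X, Y] = MvPolynomial (Fin 2) ℚ` with `X = X 0`, `Y = X 1`. -/
theorem stmt4 (n : ℕ) (hn : 1 ≤ n)
    (B : ℕ → MvPolynomial (Fin 2) ℚ)
    (hB : ∀ m, B m = if m < n then (-1) ^ m *
      ∑ j ∈ Finset.range (m + 1),
        (Nat.choose (n + 1) j : MvPolynomial (Fin 2) ℚ) * X 0 ^ j * X 1 ^ (m - j)
      else 0) :
    ∑ i ∈ Finset.range (n + 2),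
      (X 0 ^ (n + 1 - i) * B i +
        X 0 ^ (n + 1 - i) * X 1 * (if i = 0 then 0 else B (i - 1))) =
    (-1) ^ (n + 1) *
      ((n : MvPolynomial (Fin 2) ℚ) * X 0 ^ (n + 1) +
        ∑ j ∈ Finset.range n,
          (Nat.choose (n + 1) j : MvPolynomial (Fin 2) ℚ) *
            X 0 ^ (j + 1) * X 1 ^ (n - j)) :=
  stmt4_general n (X 0) (X 1) B hB
end

section
/- Fix an integer n ≥ 1 and work in ℚ[X, Y, C₁, …, C_{n+1}], with the convention C₀ = 1. For p ≥ 0 set B′_p = (−1)^p · Σ_{q=0}^{p} (−1)^q C_q · Σ_{i=0}^{p−q} C(n−q+1, i) X^i Y^{p−q−i}, and set B′_{−1} = 0. Then for every integer p with 1 ≤ p ≤ n − 1 one has Σ_{i=0}^{p} C(n+1−i, p−i) · ( X^{p−i} B′_i + X^{p−i} Y B′_{i−1} ) = C_p. -/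
open MvPolynomial Finset

/-!
Read `c` as the Chern classes of a bundle `E` of rank `n + 1`, and `x`, `y` as the first Chern
classes of line bundles `L`, `M`. The closed form `B` gives the Chern classes of
`E ⊗ L⁻¹ - M`, so that `B i + y * B (i - 1)` is the `i`-th Chern class of `E ⊗ L⁻¹`. The left-hand
side of the elimination equation twists these classes by `L`, and `E ⊗ L⁻¹ ⊗ L = E`.
-/

section ChernTwist

variable {R : Type*} [CommSemiring R]

/-- The Chern classes of `E ⊗ L`, where `E` is a bundle of rank `N` with Chern classes `c` and `L`
is a line bundle with first Chern class `x`. The formula is meant for `p ≤ N`; the truncated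
subtraction `N - i` makes it total in `p`. -/
def chernTwist (N : ℕ) (x : R) (c : ℕ → R) (p : ℕ) : R :=
  ∑ i ∈ range (p + 1), (N - i).choose (p - i) * x ^ (p - i) * c i

theorem chernTwist_zero (N : ℕ) (c : ℕ → R) (p : ℕ) : chernTwist N 0 c p = c p := by
  have lower_terms_vanish : ∀ i ∈ range p,
      ((N - i).choose (p - i) : R) * 0 ^ (p - i) * c i = 0 := fun i hi => by
    rw [zero_pow (Nat.sub_ne_zero_of_lt (mem_range.mp hi)), mul_zero, zero_mul]
  rw [chernTwist, sum_range_succ, sum_eq_zero lower_terms_vanish]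
  simp

theorem sum_choose_mul_choose_mul_pow (N k : ℕ) (x y : R) :
    ∑ j ∈ range (k + 1), ((N - j).choose (k - j) * x ^ (k - j)) * (N.choose j * y ^ j) =
      N.choose k * (x + y) ^ k := by
  rw [add_comm x y, add_pow, mul_sum]
  refine sum_congr rfl fun j hj => ?_
  have choose_mul_choose : (N.choose k * k.choose j : R) = N.choose j * (N - j).choose (k - j) := by
    rw [← Nat.cast_mul, Nat.choose_mul (Nat.lt_succ_iff.mp (mem_range.mp hj)), Nat.cast_mul]
  calc
    ((N - j).choose (k - j) * x ^ (k - j)) * (N.choose j * y ^ j)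
      = (N.choose j * (N - j).choose (k - j)) * (y ^ j * x ^ (k - j)) := by ring
    _ = N.choose k * (y ^ j * x ^ (k - j) * k.choose j) := by rw [← choose_mul_choose]; ring

theorem chernTwist_chernTwist (N : ℕ) (x y : R) (c : ℕ → R) (p : ℕ) :
    chernTwist N x (chernTwist N y c) p = chernTwist N (x + y) c p := by
  let term (q j : ℕ) : R :=
    ((N - q - j).choose (p - q - j) * x ^ (p - q - j)) * ((N - q).choose j * y ^ j) * c q
  calc
    chernTwist N x (chernTwist N y c) p
      = ∑ i ∈ range (p + 1), ∑ q ∈ range (i + 1), term q (i - q) := by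
        simp only [chernTwist, mul_sum]
        refine sum_congr rfl fun i _ => sum_congr rfl fun q hq => ?_
        have hqi : q + (i - q) = i := Nat.add_sub_of_le (Nat.lt_succ_iff.mp (mem_range.mp hq))
        simp only [term, Nat.sub_sub, hqi, mul_assoc]
    _ = ∑ q ∈ range (p + 1), ∑ j ∈ range (p + 1 - q), term q j := sum_range_diag_flip _ _
    _ = chernTwist N (x + y) c p := by
        refine sum_congr rfl fun q hq => ?_
        rw [Nat.sub_add_comm (Nat.lt_succ_iff.mp (mem_range.mp hq)), ← sum_mul,
          sum_choose_mul_choose_mul_pow]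

end ChernTwist

section ChernQuotient

variable {R : Type*} [CommRing R]

/-- The Chern classes of the virtual bundle `E - M`, where `E` has Chern classes `d` and `M` is a
line bundle with first Chern class `y`: the coefficients of `(∑ d k * t ^ k) / (1 + y * t)`. -/
def chernQuotient (y : R) (d : ℕ → R) (m : ℕ) : R :=
  ∑ k ∈ range (m + 1), (-y) ^ (m - k) * d k

theorem chernQuotient_succ (y : R) (d : ℕ → R) (m : ℕ) :
    chernQuotient y d (m + 1) = d (m + 1) - y * chernQuotient y d m := by
  have shifted_terms : ∑ k ∈ range (m + 1), (-y) ^ (m + 1 - k) * d k =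
      -y * chernQuotient y d m := by
    rw [chernQuotient, mul_sum]
    refine sum_congr rfl fun k hk => ?_
    rw [Nat.sub_add_comm (Nat.lt_succ_iff.mp (mem_range.mp hk)), pow_succ', mul_assoc]
  rw [chernQuotient, sum_range_succ, shifted_terms, Nat.sub_self, pow_zero, one_mul]
  ring

theorem chernQuotient_add_mul_pred (y : R) (d : ℕ → R) (i : ℕ) :
    chernQuotient y d i + y * (if i = 0 then 0 else chernQuotient y d (i - 1)) = d i := by
  cases i with
  | zero => simp [chernQuotient]
  | succ m => simp [chernQuotient_succ]

theorem chernQuotient_chernTwist_neg (N : ℕ) (x y : R) (c : ℕ → R) (m : ℕ) :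
    chernQuotient y (chernTwist N (-x) c) m =
      (-1) ^ m * ∑ q ∈ range (m + 1), (-1) ^ q * c q *
        ∑ i ∈ range (m - q + 1), ((N - q).choose i : R) * x ^ i * y ^ (m - q - i) := by
  let term (q i : ℕ) : R := (-y) ^ (m - q - i) * ((N - q).choose i * (-x) ^ i * c q)
  calc
    chernQuotient y (chernTwist N (-x) c) m
      = ∑ k ∈ range (m + 1), ∑ q ∈ range (k + 1), term q (k - q) := by
        simp only [chernQuotient, chernTwist, mul_sum]
        refine sum_congr rfl fun k _ => sum_congr rfl fun q hq => ?_
        have hqk : q + (k - q) = k := Nat.add_sub_of_le (Nat.lt_succ_iff.mp (mem_range.mp hq))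
        simp only [term, Nat.sub_sub, hqk]
    _ = ∑ q ∈ range (m + 1), ∑ i ∈ range (m + 1 - q), term q i := sum_range_diag_flip _ _
    _ = _ := by
        simp only [mul_sum]
        refine sum_congr rfl fun q hq => ?_
        have hqm : q ≤ m := Nat.lt_succ_iff.mp (mem_range.mp hq)
        rw [Nat.sub_add_comm hqm]
        refine sum_congr rfl fun i hi => ?_
        have him : i ≤ m - q := Nat.lt_succ_iff.mp (mem_range.mp hi)
        have sign : (-1 : R) ^ (m - q - i) * (-1) ^ i = (-1) ^ m * (-1) ^ q := by
          rw [← pow_add, Nat.sub_add_cancel him, ← pow_add]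
          exact neg_one_pow_congr (by grind)
        simp only [term, neg_pow x, neg_pow y]
        linear_combination ((N - q).choose i * x ^ i * y ^ (m - q - i) * c q) * sign

end ChernQuotient

-- At `q = n + 1` the left-hand side has the truncated value `n - q + 1 = 1`; there `i = 0`.
theorem choose_sub_add_one_eq {n q i : ℕ} (h : q + i ≤ n + 1) :
    (n - q + 1).choose i = (n + 1 - q).choose i := by
  rcases Nat.lt_or_ge n q with hnq | hqn
  · obtain rfl : i = 0 := by omega
    simp only [Nat.choose_zero_right]
  · rw [Nat.sub_add_comm hqn]

theorem stmt5_general {R : Type*} [CommRing R] (n : ℕ) (x y : R) (c B : ℕ → R)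
    (hB : ∀ m, B m = (-1) ^ m *
      ∑ q ∈ range (m + 1), (-1) ^ q * c q *
        ∑ i ∈ range (m - q + 1), ((n - q + 1).choose i : R) * x ^ i * y ^ (m - q - i))
    (p : ℕ) (hp : p ≤ n + 1) :
    ∑ i ∈ range (p + 1), ((n + 1 - i).choose (p - i) : R) *
      (x ^ (p - i) * B i + x ^ (p - i) * y * (if i = 0 then 0 else B (i - 1))) = c p := by
  let d := chernTwist (n + 1) (-x) c
  have B_eq_chernQuotient : ∀ m ≤ p, B m = chernQuotient y d m := fun m hm => by
    rw [hB, chernQuotient_chernTwist_neg]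
    congr! 5 with q hq i hi
    rw [choose_sub_add_one_eq (by grind)]
  have B_add_mul_pred : ∀ i ≤ p, B i + y * (if i = 0 then 0 else B (i - 1)) = d i :=
    fun i hi => by
      rw [B_eq_chernQuotient i hi, B_eq_chernQuotient (i - 1) (by omega),
        chernQuotient_add_mul_pred]
  calc
    _ = chernTwist (n + 1) x d p := by
        refine sum_congr rfl fun i hi => ?_
        rw [← B_add_mul_pred i (Nat.lt_succ_iff.mp (mem_range.mp hi))]
        ring
    _ = c p := by rw [chernTwist_chernTwist, add_neg_cancel, chernTwist_zero]

/-- The relative closed forms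
`B′_p = (-1)^p ∑_{q=0}^{p} (-1)^q C_q ∑_{i=0}^{p-q} C(n-q+1,i) X^i Y^{p-q-i}`
solve the relative elimination equations
`∑_{i=0}^{p} C(n+1-i, p-i) (X^{p-i} B′_i + X^{p-i} Y B′_{i-1}) = C_p` for `1 ≤ p ≤ n-1`,
in `ℚ[X, Y, C₁, …, C_{n+1}] = MvPolynomial (Fin (n+3)) ℚ` with `X = X 0`, `Y = X 1`,
`C_q = X (q+1)` for `1 ≤ q ≤ n+1`, `C₀ = 1`, and `B′_{-1} = 0`. -/
theorem stmt5 (n : ℕ) (hn : 1 ≤ n)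
    (Cc : ℕ → MvPolynomial (Fin (n + 3)) ℚ)
    (hC0 : Cc 0 = 1)
    (hC : ∀ q, 1 ≤ q → q ≤ n + 1 → ∀ h : q + 1 < n + 3, Cc q = X ⟨q + 1, h⟩)
    (B : ℕ → MvPolynomial (Fin (n + 3)) ℚ)
    (hB : ∀ m, B m = (-1) ^ m *
      ∑ q ∈ Finset.range (m + 1), (-1) ^ q * Cc q *
        ∑ i ∈ Finset.range (m - q + 1),
          (Nat.choose (n - q + 1) i : MvPolynomial (Fin (n + 3)) ℚ) *
            X 0 ^ i * X 1 ^ (m - q - i))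
    (p : ℕ) (hp1 : 1 ≤ p) (hp2 : p ≤ n - 1) :
    ∑ i ∈ Finset.range (p + 1),
      (Nat.choose (n + 1 - i) (p - i) : MvPolynomial (Fin (n + 3)) ℚ) *
        (X 0 ^ (p - i) * B i +
          X 0 ^ (p - i) * X 1 * (if i = 0 then 0 else B (i - 1))) = Cc p := by
  exact stmt5_general n (X 0) (X 1) Cc B hB p (by omega)
end

section
/- Fix an integer n ≥ 1 and work in ℚ[X, Y, C₁, …, C_{n+1}], with the convention C₀ = 1. For 0 ≤ p ≤ n − 1 set B′_p = (−1)^p · Σ_{q=0}^{p} (−1)^q C_q · Σ_{i=0}^{p−q} C(n−q+1, i) X^i Y^{p−q−i}; set B′_p = 0 for p ≥ n and B′_{−1} = 0. Then Σ_{i=0}^{n} C(n+1−i, n−i) · ( X^{n−i} B′_i + X^{n−i} Y B′_{i−1} ) − C_n = Σ_{q=0}^{n} (−1)^{n+q−1} C_q · Σ_{j=0}^{n−q} C(n−q+1, j) X^j Y^{n−q−j}. -/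
open MvPolynomial Finset

/-!
Read `C_q` as the Chern classes of a bundle `E` of rank `r = n + 1`. Twisting `E` by a line bundle
with first Chern class `t` replaces them by `∑_{i + j = p} (r - i choose j) t ^ j C_i`, and twisting
by `t` and then by `s` amounts to twisting by `s + t`. Up to truncation, the `B′_p` are the Chern
classes of the quotient of the twist of `E` by `-X` by a line bundle with first Chern class `Y`, so
that `B′_p + Y B′_{p-1}` is the `p`-th Chern class of that twist. The left-hand sum twists back by
`X`, which recovers `C_n`; cutting `B′_n` off to `0` leaves minus the untruncated `B′_n`.
-/

section SumAntidiagonal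

variable {A M : Type*} [AddMonoid A] [HasAntidiagonal A] [AddCommMonoid M]

theorem sum_antidiagonal_assoc (f : A → A → A → M) (n : A) :
    ∑ p ∈ antidiagonal n, ∑ q ∈ antidiagonal p.1, f q.1 q.2 p.2 =
      ∑ p ∈ antidiagonal n, ∑ q ∈ antidiagonal p.2, f p.1 q.1 q.2 := by
  rw [sum_sigma', sum_sigma']
  refine sum_nbij' (fun ⟨⟨_, k⟩, ⟨i, j⟩⟩ ↦ ⟨(i, j + k), (j, k)⟩)
    (fun ⟨⟨i, _⟩, ⟨j, k⟩⟩ ↦ ⟨(i + j, k), (i, j)⟩) ?_ ?_ ?_ ?_ ?_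
  all_goals
    rintro ⟨⟨_, _⟩, ⟨_, _⟩⟩ h
    simp only [mem_sigma, HasAntidiagonal.mem_antidiagonal] at h
    obtain ⟨rfl, rfl⟩ := h
    simp [add_assoc]

end SumAntidiagonal

section CommSemiring

variable {R : Type*} [CommSemiring R]

/-- The Chern classes of `E ⊗ L`, where `E` has rank `r` and Chern classes `c`, and `L` is a line
bundle with first Chern class `t`. Beyond the rank, `r - i` is truncated to `0`. -/
def twistedChern (r : ℕ) (t : R) (c : ℕ → R) (p : ℕ) : R :=
  ∑ ij ∈ antidiagonal p, ((r - ij.1).choose ij.2 : R) * t ^ ij.2 * c ij.1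

theorem twistedChern_apply_zero (r : ℕ) (t : R) (c : ℕ → R) : twistedChern r t c 0 = c 0 := by
  simp [twistedChern]

theorem twistedChern_zero (r : ℕ) (c : ℕ → R) : twistedChern r 0 c = c := by
  funext p
  cases p with
  | zero => exact twistedChern_apply_zero r 0 c
  | succ p => simp [twistedChern, Nat.sum_antidiagonal_succ']

theorem sum_antidiagonal_choose_mul_choose_mul_pow (s t : R) (N m : ℕ) :
    ∑ kj ∈ antidiagonal m,
        (N.choose kj.1 : R) * ((N - kj.1).choose kj.2 : R) * (t ^ kj.1 * s ^ kj.2) =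
      (N.choose m : R) * (s + t) ^ m := by
  rw [add_comm s t, (Commute.all t s).add_pow', mul_sum]
  refine sum_congr rfl fun kj hkj ↦ ?_
  obtain rfl := mem_antidiagonal.mp hkj
  have choose_mul : N.choose (kj.1 + kj.2) * (kj.1 + kj.2).choose kj.1 =
      N.choose kj.1 * (N - kj.1).choose kj.2 := by
    rw [Nat.choose_mul (Nat.le_add_right _ _), Nat.add_sub_cancel_left]
  rw [nsmul_eq_mul, ← mul_assoc (Nat.cast _), ← Nat.cast_mul, ← Nat.cast_mul, choose_mul]

theorem twistedChern_twistedChern (r : ℕ) (s t : R) (c : ℕ → R) :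
    twistedChern r s (twistedChern r t c) = twistedChern r (s + t) c := by
  funext p
  calc twistedChern r s (twistedChern r t c) p
    _ = ∑ ij ∈ antidiagonal p, ∑ qk ∈ antidiagonal ij.1, ((r - qk.1).choose qk.2 : R) *
          ((r - qk.1 - qk.2).choose ij.2 : R) * (t ^ qk.2 * s ^ ij.2) * c qk.1 := by
      simp only [twistedChern, mul_sum]
      refine sum_congr rfl fun ij _ ↦ sum_congr rfl fun qk hqk ↦ ?_
      rw [← mem_antidiagonal.mp hqk, Nat.sub_sub]
      ring
    _ = ∑ qm ∈ antidiagonal p, ∑ kj ∈ antidiagonal qm.2, ((r - qm.1).choose kj.1 : R) *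
          ((r - qm.1 - kj.1).choose kj.2 : R) * (t ^ kj.1 * s ^ kj.2) * c qm.1 :=
      sum_antidiagonal_assoc (fun q k j ↦ ((r - q).choose k : R) *
        ((r - q - k).choose j : R) * (t ^ k * s ^ j) * c q) p
    _ = twistedChern r (s + t) c p := by
      simp only [twistedChern, ← sum_mul, sum_antidiagonal_choose_mul_choose_mul_pow]

/-- The homogeneous component of degree `m` of `(1 + a) ^ N / (1 - b)`, for `a` and `b` of degree
one: the inner sums of the closed forms `B′_p`. -/
def binomialGeometricSum (a b : R) (N m : ℕ) : R :=
  ∑ ij ∈ antidiagonal m, (N.choose ij.1 : R) * a ^ ij.1 * b ^ ij.2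

theorem binomialGeometricSum_eq_sum_range (a b : R) (N m : ℕ) :
    binomialGeometricSum a b N m =
      ∑ i ∈ range (m + 1), (N.choose i : R) * a ^ i * b ^ (m - i) :=
  Nat.sum_antidiagonal_eq_sum_range_succ (fun i j ↦ (N.choose i : R) * a ^ i * b ^ j) m

theorem binomialGeometricSum_zero_right (a b : R) (N : ℕ) : binomialGeometricSum a b N 0 = 1 := by
  simp [binomialGeometricSum]

theorem binomialGeometricSum_succ (a b : R) (N m : ℕ) :
    binomialGeometricSum a b N (m + 1) =
      (N.choose (m + 1) : R) * a ^ (m + 1) + b * binomialGeometricSum a b N m := by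
  simp only [binomialGeometricSum, Nat.sum_antidiagonal_succ', mul_sum, pow_zero, mul_one]
  congr 1
  exact sum_congr rfl fun ij _ ↦ by ring

end CommSemiring

section CommRing

variable {R : Type*} [CommRing R]

theorem twistedChern_neg_cancel (r : ℕ) (t : R) (c : ℕ → R) :
    twistedChern r t (twistedChern r (-t) c) = c := by
  rw [twistedChern_twistedChern, add_neg_cancel, twistedChern_zero]

theorem binomialGeometricSum_neg (a b : R) (N m : ℕ) :
    binomialGeometricSum (-a) (-b) N m = (-1) ^ m * binomialGeometricSum a b N m := by
  simp only [binomialGeometricSum, mul_sum]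
  refine sum_congr rfl fun ij hij ↦ ?_
  rw [← mem_antidiagonal.mp hij, neg_pow a, neg_pow b]
  ring

/-- The Chern classes of `(E ⊗ L) / M`, where `E` has rank `r` and Chern classes `c`, and `L` and
`M` are line bundles with first Chern classes `t` and `y`. With `r = n + 1` and `t = -X`, these are
the closed forms `B′_p` before they are cut off at `p = n`. -/
def twistedQuotientChern (r : ℕ) (t y : R) (c : ℕ → R) (p : ℕ) : R :=
  ∑ qm ∈ antidiagonal p, binomialGeometricSum t (-y) (r - qm.1) qm.2 * c qm.1

theorem twistedQuotientChern_apply_zero (r : ℕ) (t y : R) (c : ℕ → R) :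
    twistedQuotientChern r t y c 0 = c 0 := by
  simp [twistedQuotientChern, binomialGeometricSum_zero_right]

/-- The Whitney formula for the extension of `(E ⊗ L) / M` by `M`. -/
theorem twistedQuotientChern_succ_add_mul (r : ℕ) (t y : R) (c : ℕ → R) (p : ℕ) :
    twistedQuotientChern r t y c (p + 1) + y * twistedQuotientChern r t y c p =
      twistedChern r t c (p + 1) := by
  simp only [twistedQuotientChern, twistedChern, Nat.sum_antidiagonal_succ',
    binomialGeometricSum_zero_right, binomialGeometricSum_succ, add_mul, sum_add_distrib,
    Nat.choose_zero_right, Nat.cast_one, pow_zero, mul_assoc, ← mul_sum]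
  ring

theorem twistedQuotientChern_neg_eq_sum_range {n p : ℕ} (hp : p ≤ n) (x y : R) (c : ℕ → R) :
    twistedQuotientChern (n + 1) (-x) y c p =
      (-1) ^ p * ∑ q ∈ range (p + 1), (-1) ^ q * c q *
        ∑ i ∈ range (p - q + 1), ((n - q + 1).choose i : R) * x ^ i * y ^ (p - q - i) := by
  rw [twistedQuotientChern, Nat.sum_antidiagonal_eq_sum_range_succ
    (fun q m ↦ binomialGeometricSum (-x) (-y) (n + 1 - q) m * c q), mul_sum]
  refine sum_congr rfl fun q hq ↦ ?_
  have hqp : q ≤ p := mem_range_succ_iff.mp hq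
  have sign : (-1 : R) ^ (p - q) = (-1) ^ p * (-1) ^ q := by
    rw [← pow_sub_mul_pow (-1) hqp, mul_assoc, ← mul_pow, neg_one_mul, neg_neg, one_pow, mul_one]
  rw [binomialGeometricSum_neg, sign, Nat.sub_add_comm (hqp.trans hp),
    binomialGeometricSum_eq_sum_range]
  ring

/-- The truncation at `n` spoils the Whitney formula only in degree `n`. -/
theorem truncated_twistedQuotientChern_add_mul_pred (r n : ℕ) (t y : R) (c b : ℕ → R)
    (hb : ∀ m, b m = if m < n then twistedQuotientChern r t y c m else 0) {i : ℕ} (hi : i ≤ n) :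
    b i + y * (if i = 0 then 0 else b (i - 1)) =
      twistedChern r t c i - if i = n then twistedQuotientChern r t y c n else 0 := by
  have untruncated : twistedQuotientChern r t y c i + y * (if i = 0 then 0 else b (i - 1)) =
      twistedChern r t c i := by
    cases i with
    | zero => simp [twistedQuotientChern_apply_zero, twistedChern_apply_zero]
    | succ m => simp [← twistedQuotientChern_succ_add_mul r t y, hb m, Nat.lt_of_succ_le hi]
  rw [← untruncated, hb i]
  rcases hi.lt_or_eq with hlt | rfl
  · simp [hlt, hlt.ne]
  · simp

theorem sum_choose_mul_truncated_twistedQuotientChern (n : ℕ) (x y : R) (c b : ℕ → R)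
    (hb : ∀ m, b m = if m < n then twistedQuotientChern (n + 1) (-x) y c m else 0) :
    ∑ i ∈ range (n + 1), ((n + 1 - i).choose (n - i) : R) *
        (x ^ (n - i) * b i + x ^ (n - i) * y * (if i = 0 then 0 else b (i - 1))) =
      c n - twistedQuotientChern (n + 1) (-x) y c n := by
  calc _
    _ = ∑ i ∈ range (n + 1), ((n + 1 - i).choose (n - i) : R) * x ^ (n - i) *
          (twistedChern (n + 1) (-x) c i -
            if i = n then twistedQuotientChern (n + 1) (-x) y c n else 0) := by
      refine sum_congr rfl fun i hi ↦ ?_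
      rw [← truncated_twistedQuotientChern_add_mul_pred (n + 1) n (-x) y c b hb
        (mem_range_succ_iff.mp hi)]
      ring
    _ = twistedChern (n + 1) x (twistedChern (n + 1) (-x) c) n -
          twistedQuotientChern (n + 1) (-x) y c n := by
      simp [mul_sub, sum_sub_distrib, twistedChern, Nat.sum_antidiagonal_eq_sum_range_succ_mk]
    _ = c n - twistedQuotientChern (n + 1) (-x) y c n := by
      rw [twistedChern_neg_cancel]

theorem stmt6_general (n : ℕ) (hn : 1 ≤ n) (x y : R) (c B : ℕ → R)
    (hB : ∀ m, B m = if m < n then (-1) ^ m *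
      ∑ q ∈ range (m + 1), (-1) ^ q * c q *
        ∑ i ∈ range (m - q + 1), ((n - q + 1).choose i : R) * x ^ i * y ^ (m - q - i)
      else 0) :
    (∑ i ∈ range (n + 1), ((n + 1 - i).choose (n - i) : R) *
        (x ^ (n - i) * B i + x ^ (n - i) * y * (if i = 0 then 0 else B (i - 1)))) - c n =
    ∑ q ∈ range (n + 1), (-1) ^ (n + q - 1) * c q *
      ∑ j ∈ range (n - q + 1), ((n - q + 1).choose j : R) * x ^ j * y ^ (n - q - j) := by
  have hB_quotient (m : ℕ) :
      B m = if m < n then twistedQuotientChern (n + 1) (-x) y c m else 0 := by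
    rw [hB]
    split_ifs with hm
    · exact (twistedQuotientChern_neg_eq_sum_range hm.le x y c).symm
    · rfl
  have rhs_eq : ∑ q ∈ range (n + 1), (-1) ^ (n + q - 1) * c q *
      ∑ j ∈ range (n - q + 1), ((n - q + 1).choose j : R) * x ^ j * y ^ (n - q - j) =
      -twistedQuotientChern (n + 1) (-x) y c n := by
    obtain ⟨k, rfl⟩ := Nat.exists_eq_add_of_le' hn
    rw [twistedQuotientChern_neg_eq_sum_range le_rfl, mul_sum, ← sum_neg_distrib]
    refine sum_congr rfl fun q _ ↦ ?_
    rw [Nat.add_right_comm, Nat.add_sub_cancel]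
    ring
  rw [rhs_eq, sum_choose_mul_truncated_twistedQuotientChern n x y c B hB_quotient]
  ring

end CommRing

/-- The differential `∂(s⁻¹c_n) = h(c_n) - c_n` in the relative Sullivan model of the
Borel construction: with `B′_p` the relative closed forms (cut off to `0` for `p ≥ n`,
and `B′_{-1} = 0`),
`∑_{i=0}^{n} C(n+1-i, n-i) (X^{n-i} B′_i + X^{n-i} Y B′_{i-1}) - C_n
  = ∑_{q=0}^{n} (-1)^{n+q-1} C_q ∑_{j=0}^{n-q} C(n-q+1,j) X^j Y^{n-q-j}`
in `ℚ[X, Y, C₁, …, C_{n+1}] = MvPolynomial (Fin (n+3)) ℚ` with `X = X 0`, `Y = X 1`,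
`C_q = X (q+1)` for `1 ≤ q ≤ n+1`, and `C₀ = 1`. -/
theorem stmt6 (n : ℕ) (hn : 1 ≤ n)
    (Cc : ℕ → MvPolynomial (Fin (n + 3)) ℚ)
    (hC0 : Cc 0 = 1)
    (hC : ∀ q, 1 ≤ q → q ≤ n + 1 → ∀ h : q + 1 < n + 3, Cc q = X ⟨q + 1, h⟩)
    (B : ℕ → MvPolynomial (Fin (n + 3)) ℚ)
    (hB : ∀ m, B m = if m < n then (-1) ^ m *
      ∑ q ∈ Finset.range (m + 1), (-1) ^ q * Cc q *
        ∑ i ∈ Finset.range (m - q + 1),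
          (Nat.choose (n - q + 1) i : MvPolynomial (Fin (n + 3)) ℚ) *
            X 0 ^ i * X 1 ^ (m - q - i)
      else 0) :
    (∑ i ∈ Finset.range (n + 1),
      (Nat.choose (n + 1 - i) (n - i) : MvPolynomial (Fin (n + 3)) ℚ) *
        (X 0 ^ (n - i) * B i +
          X 0 ^ (n - i) * X 1 * (if i = 0 then 0 else B (i - 1)))) - Cc n =
    ∑ q ∈ Finset.range (n + 1),
      (-1) ^ (n + q - 1) * Cc q *
        ∑ j ∈ Finset.range (n - q + 1),
          (Nat.choose (n - q + 1) j : MvPolynomial (Fin (n + 3)) ℚ) *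
            X 0 ^ j * X 1 ^ (n - q - j) := by
  exact stmt6_general n hn (X 0) (X 1) Cc B hB
end
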